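/- arXiv:2501.07891 — 3 statements merged into one kernel-verified Lean document; each statement's English description precedes it below -/
import Mathlib

section
/- Let n ≥ 1, let ρ, σ be n×n complex matrices, let S be the swap operator on ℂⁿ⊗ℂⁿ, and let t be real. Then Tr₁[exp(−i t S)(ρ⊗σ)exp(i t S)] = cos²(t)·Tr(ρ)·σ + sin²(t)·Tr(σ)·ρ − i·sin(t)cos(t)·(ρσ − σρ), where Tr₁ denotes the partial trace over the first tensor factor. -/
open Matrix
open scoped Kronecker

/-- The swap operator `S` on `ℂⁿ ⊗ ℂⁿ`, with entries `S[(i,j),(k,l)] = δ_{i,l} δ_{j,k}`. -/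
noncomputable def swapOp (n : ℕ) : Matrix (Fin n × Fin n) (Fin n × Fin n) ℂ :=
  Matrix.of fun p q => if p.1 = q.2 ∧ p.2 = q.1 then 1 else 0

/-- Partial trace over the first tensor factor:
`(Tr₁ M)[j,l] = Σ_i M[(i,j),(i,l)]`. -/
noncomputable def ptrace1 {n : ℕ} (M : Matrix (Fin n × Fin n) (Fin n × Fin n) ℂ) :
    Matrix (Fin n) (Fin n) ℂ :=
  Matrix.of fun j l => ∑ i : Fin n, M (i, j) (i, l)

lemma swapOp_mul_apply {n : ℕ} (M : Matrix (Fin n × Fin n) (Fin n × Fin n) ℂ)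
    (p q : Fin n × Fin n) : (swapOp n * M) p q = M (p.2, p.1) q := by
  rw [Matrix.mul_apply, Finset.sum_eq_single (p.2, p.1)]
  · simp [swapOp]
  · rintro ⟨a, b⟩ _ h
    have : ¬ (p.1 = b ∧ p.2 = a) := by
      rintro ⟨rfl, rfl⟩
      exact h rfl
    simp [swapOp, this]
  · simp

lemma mul_swapOp_apply {n : ℕ} (M : Matrix (Fin n × Fin n) (Fin n × Fin n) ℂ)
    (p q : Fin n × Fin n) : (M * swapOp n) p q = M p (q.2, q.1) := by
  rw [Matrix.mul_apply, Finset.sum_eq_single (q.2, q.1)]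
  · simp [swapOp]
  · rintro ⟨a, b⟩ _ h
    have : ¬ (a = q.2 ∧ b = q.1) := by
      rintro ⟨rfl, rfl⟩
      exact h rfl
    simp [swapOp, this]
  · simp

lemma swapOp_mul_self (n : ℕ) : swapOp n * swapOp n = 1 := by
  ext ⟨a, b⟩ ⟨c, d⟩
  rw [swapOp_mul_apply]
  simp [swapOp, Matrix.one_apply, and_comm]

lemma swapOp_pow_smul (n : ℕ) (z : ℂ) (k : ℕ) :
    (z • swapOp n) ^ k =
      z ^ k • ((1 / 2 : ℂ) • (1 + swapOp n)) + (-z) ^ k • ((1 / 2 : ℂ) • (1 - swapOp n)) := by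
  induction k with
  | zero =>
    simp only [pow_zero, one_smul]
    module
  | succ k ih =>
    rw [pow_succ, ih]
    simp only [add_mul, sub_mul, smul_mul_assoc, mul_smul_comm, one_mul, swapOp_mul_self]
    rw [pow_succ, pow_succ]
    module

lemma exp_smul_swapOp (n : ℕ) (z : ℂ) :
    NormedSpace.exp (z • swapOp n) = Complex.cosh z • 1 + Complex.sinh z • swapOp n := by
  have key : ∀ w : ℂ, HasSum (fun k : ℕ => ((k.factorial : ℂ)⁻¹ * w ^ k)) (Complex.exp w) := by
    intro w
    have := NormedSpace.exp_series_hasSum_exp' (𝕂 := ℂ) w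
    rw [← Complex.exp_eq_exp_ℂ] at this
    simpa using this
  have h := ((key z).smul_const ((1 / 2 : ℂ) • (1 + swapOp n))).add
    ((key (-z)).smul_const ((1 / 2 : ℂ) • (1 - swapOp n)))
  rw [NormedSpace.exp_eq_tsum ℂ]
  have e : (fun k : ℕ => ((k.factorial : ℂ)⁻¹) • (z • swapOp n) ^ k) = fun k : ℕ =>
      ((k.factorial : ℂ)⁻¹ * z ^ k) • ((1 / 2 : ℂ) • (1 + swapOp n)) +
      ((k.factorial : ℂ)⁻¹ * (-z) ^ k) • ((1 / 2 : ℂ) • (1 - swapOp n)) := by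
    funext k
    rw [swapOp_pow_smul, smul_add, mul_smul, mul_smul]
  change ∑' k : ℕ, ((k.factorial : ℂ)⁻¹) • (z • swapOp n) ^ k = _
  rw [e, h.tsum_eq, Complex.cosh, Complex.sinh]
  module

/-- `Tr₁[exp(−itS)(ρ⊗σ)exp(itS)]
      = cos²(t)·Tr(ρ)·σ + sin²(t)·Tr(σ)·ρ − i·sin(t)cos(t)·(ρσ − σρ)`. -/
theorem ptrace1_exp_swap_conj {n : ℕ} (hn : 1 ≤ n)
    (ρ σ : Matrix (Fin n) (Fin n) ℂ) (t : ℝ) :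
    ptrace1 (NormedSpace.exp ((-(Complex.I * (t : ℂ))) • swapOp n) * (ρ ⊗ₖ σ) *
        NormedSpace.exp ((Complex.I * (t : ℂ)) • swapOp n)) =
      ((Real.cos t : ℂ) ^ 2 * ρ.trace) • σ + ((Real.sin t : ℂ) ^ 2 * σ.trace) • ρ -
        (Complex.I * (Real.sin t : ℂ) * (Real.cos t : ℂ)) • (ρ * σ - σ * ρ) := by
  rw [exp_smul_swapOp, exp_smul_swapOp, Complex.cosh_neg, Complex.sinh_neg, mul_comm Complex.I,
    Complex.cosh_mul_I, Complex.sinh_mul_I, ← Complex.ofReal_cos, ← Complex.ofReal_sin]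
  have hI : Complex.I * Complex.I = -1 := Complex.I_mul_I
  generalize (Real.cos t : ℂ) = c
  generalize (Real.sin t : ℂ) = s
  have hexp : (c • (1 : Matrix (Fin n × Fin n) (Fin n × Fin n) ℂ) + -(s * Complex.I) • swapOp n) *
      (ρ ⊗ₖ σ) * (c • 1 + (s * Complex.I) • swapOp n) =
      c ^ 2 • (ρ ⊗ₖ σ) + s ^ 2 • (swapOp n * (ρ ⊗ₖ σ) * swapOp n) +
      (Complex.I * s * c) • ((ρ ⊗ₖ σ) * swapOp n - swapOp n * (ρ ⊗ₖ σ)) := by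
    have hs : s ^ 2 = -(s * Complex.I) * (s * Complex.I) := by linear_combination s ^ 2 * hI
    rw [hs]
    simp only [add_mul, mul_add, smul_mul_assoc, mul_smul_comm, one_mul, mul_one]
    module
  rw [hexp]
  ext j l
  simp only [ptrace1, Matrix.of_apply, Matrix.add_apply, Matrix.sub_apply, Matrix.smul_apply,
    mul_swapOp_apply, swapOp_mul_apply, Matrix.kroneckerMap_apply, smul_eq_mul]
  simp only [Matrix.trace, Matrix.diag_apply, Matrix.mul_apply, Finset.sum_add_distrib, Finset.sum_sub_distrib,
    ← Finset.mul_sum, ← Finset.sum_mul]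
  have h1 : ∑ i, ρ i l * σ j i = ∑ i, σ j i * ρ i l :=
    Finset.sum_congr rfl fun i _ => mul_comm _ _
  rw [h1]
  ring
end

section
/- Let A be an n×n Hermitian positive semidefinite complex matrix with an orthonormal basis of eigenvectors λ₁,…,λₙ and corresponding eigenvalues r₁ > r₂ ≥ r₃ ≥ … ≥ rₙ ≥ 0 with r₁ > 0. Let x₀ ∈ ℂⁿ be a unit vector with c := |⟨λ₁, x₀⟩| > 0, and let x_k := Aᵏ x₀ for an integer k ≥ 0 (note x_k ≠ 0). Then the Rayleigh quotient R_k := ⟨x_k, A x_k⟩ / ‖x_k‖² satisfies 0 ≤ r₁ − R_k ≤ r₁ · ((1 − c²)/c²) · (r₂/r₁)^{2k}. -/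
open Matrix
open scoped ComplexOrder

/-- Error bound for the Rayleigh quotient of the power method: for a Hermitian
positive semidefinite `A` with orthonormal eigenbasis `λ₁,…,λₙ`, eigenvalues
`r₁ > r₂ ≥ … ≥ rₙ ≥ 0`, `r₁ > 0`, and a unit vector `x₀` with
`c = |⟨λ₁, x₀⟩| > 0`, the iterate `x_k = Aᵏ x₀` satisfies
`0 ≤ r₁ − R_k ≤ r₁·((1 − c²)/c²)·(r₂/r₁)^{2k}` where
`R_k = ⟨x_k, A x_k⟩/‖x_k‖²`. -/
theorem power_method_rayleigh_quotient_bound {n : ℕ}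
    (A : Matrix (Fin (n + 2)) (Fin (n + 2)) ℂ)
    (hA : A.PosSemidef)
    (lam : Fin (n + 2) → EuclideanSpace ℂ (Fin (n + 2)))
    (hon : Orthonormal ℂ lam)
    (r : Fin (n + 2) → ℝ)
    (heig : ∀ i, Matrix.toEuclideanLin A (lam i) = (r i : ℂ) • lam i)
    (hmono : ∀ i j : Fin (n + 2), i ≤ j → r j ≤ r i)
    (hnn : ∀ i, 0 ≤ r i)
    (hgap : r 1 < r 0) (hr0 : 0 < r 0)
    (x0 : EuclideanSpace ℂ (Fin (n + 2))) (hx0 : ‖x0‖ = 1)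
    (c : ℝ) (hc : c = ‖(inner ℂ (lam 0) x0 : ℂ)‖) (hcpos : 0 < c)
    (k : ℕ)
    (xk : EuclideanSpace ℂ (Fin (n + 2)))
    (hxk : xk = Matrix.toEuclideanLin (A ^ k) x0)
    (Rk : ℝ)
    (hRk : Rk = (inner ℂ xk (Matrix.toEuclideanLin A xk) : ℂ).re / ‖xk‖ ^ 2) :
    0 ≤ r 0 - Rk ∧ r 0 - Rk ≤ r 0 * ((1 - c ^ 2) / c ^ 2) * (r 1 / r 0) ^ (2 * k) := by
  obtain ⟨b, hb⟩ : ∃ b : OrthonormalBasis (Fin (n + 2)) ℂ (EuclideanSpace ℂ (Fin (n + 2))),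
      ∀ i, b i = lam i := by
    have h := Orthonormal.exists_orthonormalBasis_extension_of_card_eq (𝕜 := ℂ)
      (E := EuclideanSpace ℂ (Fin (n + 2))) (ι := Fin (n + 2)) (by simp) (v := lam) (s := Set.univ)
      (hon.comp _ Subtype.val_injective)
    obtain ⟨b, hb⟩ := h
    exact ⟨b, fun i => hb i (Set.mem_univ i)⟩
  have hsym : (Matrix.toEuclideanLin A).IsSymmetric :=
    Matrix.isSymmetric_toEuclideanLin_iff.mpr hA.isHermitian
  have hstep : ∀ i y, inner ℂ (lam i) (Matrix.toEuclideanLin A y) = (r i : ℂ) * inner ℂ (lam i) y := by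
    intro i y
    rw [← hsym, heig, inner_smul_left, Complex.conj_ofReal]
  have hpow : ∀ i, inner ℂ (lam i) xk = (r i : ℂ) ^ k * inner ℂ (lam i) x0 := by
    intro i
    rw [hxk]
    clear hxk hRk
    induction k with
    | zero => simp [Matrix.toLpLin_apply]
    | succ m ih =>
      have : Matrix.toEuclideanLin (A ^ (m + 1)) x0
          = Matrix.toEuclideanLin A (Matrix.toEuclideanLin (A ^ m) x0) := by
        simp [Matrix.toLpLin_apply, Matrix.mulVec_mulVec, pow_succ']
      rw [this, hstep, ih, pow_succ']
      ring
  obtain ⟨p, hp⟩ : ∃ p : Fin (n + 2) → ℝ, ∀ i, p i = ‖(inner ℂ (lam i) x0 : ℂ)‖ ^ 2 := ⟨_, fun _ => rfl⟩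
  have hp0 : ∀ i, 0 ≤ p i := fun i => by rw [hp]; positivity
  have hpc : p 0 = c ^ 2 := by rw [hp, hc]
  have hsum : ∑ i, p i = 1 := by
    have h := b.sum_sq_norm_inner_right x0
    simp only [hb, hx0] at h
    simpa [hp] using h
  have hS : ‖xk‖ ^ 2 = ∑ i, r i ^ (2 * k) * p i := by
    rw [← b.sum_sq_norm_inner_right xk]
    refine Finset.sum_congr rfl fun i _ => ?_
    rw [hb, hpow, hp, norm_mul, norm_pow, Complex.norm_real, Real.norm_of_nonneg (hnn i)]
    ring
  have hT : (inner ℂ xk (Matrix.toEuclideanLin A xk) : ℂ).re = ∑ i, r i * (r i ^ (2 * k) * p i) := by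
    rw [← b.sum_inner_mul_inner xk, Complex.re_sum]
    refine Finset.sum_congr rfl fun i _ => ?_
    rw [hb, hstep, ← inner_conj_symm, mul_left_comm, Complex.conj_mul', ← Complex.ofReal_pow,
      ← Complex.ofReal_mul, Complex.ofReal_re, hpow, hp, norm_mul, norm_pow, Complex.norm_real,
      Real.norm_of_nonneg (hnn i)]
    ring
  have hterm : ∀ i, 0 ≤ r i ^ (2 * k) * p i := fun i => mul_nonneg (pow_nonneg (hnn i) _) (hp0 i)
  have hSge : r 0 ^ (2 * k) * c ^ 2 ≤ ‖xk‖ ^ 2 := by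
    rw [hS, ← hpc]
    exact Finset.single_le_sum (f := fun i => r i ^ (2 * k) * p i) (fun i _ => hterm i)
      (Finset.mem_univ 0)
  have hpos : 0 < r 0 ^ (2 * k) * c ^ 2 := by positivity
  have hSpos : 0 < ‖xk‖ ^ 2 := hpos.trans_le hSge
  have hD : r 0 - Rk = (∑ i, (r 0 - r i) * (r i ^ (2 * k) * p i)) / ‖xk‖ ^ 2 := by
    rw [hRk, hT, eq_div_iff hSpos.ne', sub_mul, div_mul_cancel₀ _ hSpos.ne', hS, Finset.mul_sum,
      ← Finset.sum_sub_distrib]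
    exact Finset.sum_congr rfl fun i _ => by ring
  have hDnn : 0 ≤ ∑ i, (r 0 - r i) * (r i ^ (2 * k) * p i) :=
    Finset.sum_nonneg fun i _ => mul_nonneg (sub_nonneg.mpr (hmono 0 i (Fin.zero_le i))) (hterm i)
  have hDle : ∑ i, (r 0 - r i) * (r i ^ (2 * k) * p i) ≤ r 0 * r 1 ^ (2 * k) * (1 - c ^ 2) := by
    have h1 : 1 - c ^ 2 = ∑ i : Fin (n + 1), p i.succ := by
      rw [← hsum, Fin.sum_univ_succ, hpc]; ring
    rw [h1, Fin.sum_univ_succ, sub_self, zero_mul, zero_add, Finset.mul_sum]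
    refine Finset.sum_le_sum fun i _ => ?_
    rw [← mul_assoc]
    refine mul_le_mul_of_nonneg_right ?_ (hp0 _)
    have h2 : r i.succ ≤ r 1 := hmono _ _ (by
      rw [Fin.le_def]; simp)
    have h3 := hnn i.succ
    exact mul_le_mul (by linarith) (pow_le_pow_left₀ h3 h2 _) (pow_nonneg h3 _) hr0.le
  rw [hD]
  refine ⟨div_nonneg hDnn hSpos.le, ?_⟩
  calc _ ≤ (r 0 * r 1 ^ (2 * k) * (1 - c ^ 2)) / (r 0 ^ (2 * k) * c ^ 2) :=
        div_le_div₀ (hDnn.trans hDle) hDle hpos hSge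
    _ = _ := by
      rw [div_pow]
      field_simp
end

section
/- Let A be an n×n Hermitian positive semidefinite complex matrix with an orthonormal basis of eigenvectors λ₁,…,λₙ and corresponding eigenvalues r₁ > r₂ ≥ … ≥ rₙ ≥ 0 with r₁ > 0. Let x₀ ∈ ℂⁿ be a unit vector with c := |⟨λ₁, x₀⟩| > 0 and set x_k := Aᵏ x₀. Then the component of the normalized iterate orthogonal to the top eigenvector satisfies ‖ (I − λ₁λ₁†) x_k ‖ / ‖x_k‖ ≤ (√(1 − c²)/c) · (r₂/r₁)^{k}, i.e., the normalized power iterates converge geometrically (at rate r₂/r₁) to the eigenspace of the largest eigenvalue. -/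
open Matrix
open scoped ComplexOrder

set_option maxHeartbeats 2000000 in
/-- Geometric convergence of normalized power iterates to the top eigenspace:
for a Hermitian positive semidefinite `A` with orthonormal eigenbasis, eigenvalues
`r₁ > r₂ ≥ … ≥ rₙ ≥ 0`, `r₁ > 0`, and a unit vector `x₀` with
`c = |⟨λ₁, x₀⟩| > 0`, the iterate `x_k = Aᵏ x₀` satisfies
`‖(I − λ₁λ₁†) x_k‖/‖x_k‖ ≤ (√(1 − c²)/c)·(r₂/r₁)^k`. -/
theorem power_method_orthogonal_component_bound {n : ℕ}
    (A : Matrix (Fin (n + 2)) (Fin (n + 2)) ℂ)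
    (hA : A.PosSemidef)
    (lam : Fin (n + 2) → EuclideanSpace ℂ (Fin (n + 2)))
    (hon : Orthonormal ℂ lam)
    (r : Fin (n + 2) → ℝ)
    (heig : ∀ i, Matrix.toEuclideanLin A (lam i) = (r i : ℂ) • lam i)
    (hmono : ∀ i j : Fin (n + 2), i ≤ j → r j ≤ r i)
    (hnn : ∀ i, 0 ≤ r i)
    (hgap : r 1 < r 0) (hr0 : 0 < r 0)
    (x0 : EuclideanSpace ℂ (Fin (n + 2))) (hx0 : ‖x0‖ = 1)
    (c : ℝ) (hc : c = ‖(inner ℂ (lam 0) x0 : ℂ)‖) (hcpos : 0 < c)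
    (k : ℕ)
    (xk : EuclideanSpace ℂ (Fin (n + 2)))
    (hxk : xk = Matrix.toEuclideanLin (A ^ k) x0) :
    ‖xk - (inner ℂ (lam 0) xk : ℂ) • lam 0‖ / ‖xk‖ ≤
      (Real.sqrt (1 - c ^ 2) / c) * (r 1 / r 0) ^ k := by
  have hcard : Fintype.card (Fin (n + 2)) =
      Module.finrank ℂ (EuclideanSpace ℂ (Fin (n + 2))) := by simp
  let b0 := basisOfOrthonormalOfCardEqFinrank hon hcard
  have hb0 : ⇑b0 = lam := coe_basisOfOrthonormalOfCardEqFinrank hon hcard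
  let b : OrthonormalBasis (Fin (n + 2)) ℂ (EuclideanSpace ℂ (Fin (n + 2))) :=
    b0.toOrthonormalBasis (by rw [hb0]; exact hon)
  have hb : ∀ i, b i = lam i := by
    intro i
    simp [b, hb0]
  -- coordinates of the iterates
  have hsym : (Matrix.toEuclideanLin A).IsSymmetric :=
    Matrix.isSymmetric_toEuclideanLin_iff.mpr hA.1
  have hcoord : ∀ (m : ℕ) (i : Fin (n + 2)),
      (inner ℂ (lam i) (Matrix.toEuclideanLin (A ^ m) x0) : ℂ)
        = ((r i : ℂ)) ^ m * inner ℂ (lam i) x0 := by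
    intro m i
    induction m with
    | zero => simp [Matrix.toLpLin_one]
    | succ m ih =>
      have h1 : Matrix.toEuclideanLin (A ^ (m + 1)) x0
          = Matrix.toEuclideanLin A (Matrix.toEuclideanLin (A ^ m) x0) := by
        rw [pow_succ']
        simp [Matrix.toEuclideanLin, Matrix.toLpLin_apply, Matrix.mulVec_mulVec]
      rw [h1, ← hsym, heig, inner_smul_left, ih, Complex.conj_ofReal]
      ring
  have hnormsq : ∀ v : EuclideanSpace ℂ (Fin (n + 2)),
      ‖v‖ ^ 2 = ∑ i, ‖(inner ℂ (lam i) v : ℂ)‖ ^ 2 := by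
    intro v
    rw [← b.sum_sq_norm_inner_right v]
    simp only [hb]
  have hn : ∀ i, ‖lam i‖ = 1 := hon.1
  have hperp : ‖xk - (inner ℂ (lam 0) xk : ℂ) • lam 0‖ ^ 2
      = ∑ i : Fin (n + 1), ‖(inner ℂ (lam i.succ) xk : ℂ)‖ ^ 2 := by
    rw [hnormsq, Fin.sum_univ_succ]
    have h00 : (inner ℂ (lam 0) (lam 0) : ℂ) = 1 := by
      rw [inner_self_eq_norm_sq_to_K, hn]; simp
    have h0 : ∀ i : Fin (n + 1), (inner ℂ (lam i.succ) (lam 0) : ℂ) = 0 :=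
      fun i => hon.2 (Fin.succ_ne_zero i)
    simp [inner_sub_right, inner_smul_right, h00, h0, -inner_self_eq_norm_sq_to_K]
  have hx0s : ∑ i : Fin (n + 1), ‖(inner ℂ (lam i.succ) x0 : ℂ)‖ ^ 2 = 1 - c ^ 2 := by
    have := hnormsq x0
    rw [hx0, Fin.sum_univ_succ, ← hc] at this
    linarith
  have hnc : ∀ i, ‖(inner ℂ (lam i) xk : ℂ)‖ = r i ^ k * ‖(inner ℂ (lam i) x0 : ℂ)‖ := by
    intro i
    rw [hxk, hcoord, norm_mul, norm_pow, Complex.norm_real, Real.norm_of_nonneg (hnn i)]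
  have hupper : ‖xk - (inner ℂ (lam 0) xk : ℂ) • lam 0‖ ≤ r 1 ^ k * Real.sqrt (1 - c ^ 2) := by
    have h1k : 0 ≤ r 1 ^ k := pow_nonneg (hnn 1) k
    have hnng : 0 ≤ 1 - c ^ 2 := by rw [← hx0s]; positivity
    refine (sq_le_sq₀ (norm_nonneg _) (by positivity)).mp ?_
    rw [hperp, mul_pow, Real.sq_sqrt hnng, ← hx0s, Finset.mul_sum]
    refine Finset.sum_le_sum fun i _ => ?_
    rw [hnc, mul_pow]
    have hle : r i.succ ≤ r 1 := hmono _ _ (by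
      rw [Fin.le_def]; simp)
    have := hnn i.succ
    gcongr
  have hlower : r 0 ^ k * c ≤ ‖xk‖ := by
    have h := norm_inner_le_norm (𝕜 := ℂ) (lam 0) xk
    rwa [hnc, hn, one_mul, ← hc] at h
  have hpos : 0 < r 0 ^ k * c := by positivity
  have h1k : 0 ≤ r 1 ^ k := pow_nonneg (hnn 1) k
  calc _ ≤ (r 1 ^ k * Real.sqrt (1 - c ^ 2)) / (r 0 ^ k * c) :=
        div_le_div₀ (by positivity) hupper hpos hlower
    _ = _ := by rw [div_pow]; field_simp
end
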